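/- Proposition 3 (goodput gain of limited feedback precoded spatial multiplexing with other-cell interference and feedback delay D): with the notation below and assuming r ≤ 1/2, the ergodic goodput gain satisfies Δρ_P(D) ≤ a·(√λ)^{2D} + b·(√λ)^D, where a = r·Σ_{k1D,k2D} (max_{k10,k20} C_P(k1D,k10,k2D,k20))·π and b = (1−r)·Σ_{k1D,k10,k2D} (max_{k20} C_P(k1D,k10,k2D,k20))·π²·√π + Σ_{k1D,k2D,k20} (max_{k10} C_P(k1D,k10,k2D,k20))·π²·√π. -/

import Mathlib

/-!
Each link contributes a weight on pairs (state at transmission, state fed back): the delayed law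
`W = π • P ^ D`, or its limit, the constant `U = π ^ 2`. The averaged goodput `B W₁ W₂` is bilinear
in the two weights, so with `Δ = W - U`
`r B W W + (1 - r) B W U - B U U = r B Δ Δ + B Δ U + r B U Δ`.
In each term Hölder's inequality pulls the maximum of the goodput out of the sums against `Δ`, whose
rows have `ℓ¹` norm at most `√π (√λ) ^ D`. Since `r ≤ 1 - r`, the last term fits under the
`(1 - r)` part of `b`.
-/

theorem sup'_univ_nonneg {ι α : Type*} [Fintype ι] [Nonempty ι] [SemilatticeSup α] [Zero α]
    {c : ι → α} (hc : ∀ i, 0 ≤ c i) :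
    0 ≤ Finset.univ.sup' Finset.univ_nonempty c :=
  Finset.le_sup'_of_le c (Finset.mem_univ (Classical.arbitrary ι)) (hc _)

section Hoelder

variable {R ι κ : Type*} [Ring R] [LinearOrder R] [IsOrderedRing R]

theorem sum_mul_le_sup'_mul_sum_abs {s : Finset ι} (hs : s.Nonempty) {c : ι → R}
    (hc : ∀ i ∈ s, 0 ≤ c i) (e : ι → R) :
    ∑ i ∈ s, c i * e i ≤ s.sup' hs c * ∑ i ∈ s, |e i| := by
  rw [Finset.mul_sum]
  refine Finset.sum_le_sum fun i hi => ?_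
  calc c i * e i ≤ c i * |e i| := mul_le_mul_of_nonneg_left (le_abs_self _) (hc i hi)
    _ ≤ s.sup' hs c * |e i| := mul_le_mul_of_nonneg_right (Finset.le_sup' c hi) (abs_nonneg _)

theorem sum_sum_mul_le_sup'_sup'_mul_sum_abs {s : Finset ι} {t : Finset κ} (hs : s.Nonempty)
    (ht : t.Nonempty) {c : ι → κ → R} (hc : ∀ i ∈ s, ∀ j ∈ t, 0 ≤ c i j) (e : ι → R) (f : κ → R) :
    ∑ i ∈ s, ∑ j ∈ t, c i j * (e i * f j) ≤
      (s.sup' hs fun i => t.sup' ht (c i)) * ((∑ i ∈ s, |e i|) * ∑ j ∈ t, |f j|) := by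
  have h := sum_mul_le_sup'_mul_sum_abs (hs.product ht) (c := fun x => c x.1 x.2)
    (fun x hx => hc _ (Finset.mem_product.1 hx).1 _ (Finset.mem_product.1 hx).2)
    (fun x => e x.1 * f x.2)
  simpa only [Finset.sum_product, Finset.sup'_product_left, abs_mul, ← Finset.sum_mul_sum] using h

end Hoelder

section WeightedGoodput

variable {κ₁ ι₁ κ₂ ι₂ : Type*} [Fintype κ₁] [Fintype ι₁] [Fintype κ₂] [Fintype ι₂]

/-- The goodput `C` summed against a weight for each of the two links, where `Wᵢ k m` weights the
state `k` at transmission together with the fed-back state `m`. The weights may be signed, so that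
differences of joint laws are allowed. -/
def weightedGoodput (C : κ₁ × ι₁ × κ₂ × ι₂ → ℝ) (W₁ : Matrix κ₁ ι₁ ℝ) (W₂ : Matrix κ₂ ι₂ ℝ) : ℝ :=
  ∑ k₁, ∑ m₁, ∑ k₂, ∑ m₂, C (k₁, m₁, k₂, m₂) * (W₁ k₁ m₁ * W₂ k₂ m₂)

namespace weightedGoodput

variable {C : κ₁ × ι₁ × κ₂ × ι₂ → ℝ} {W₁ U₁ : Matrix κ₁ ι₁ ℝ} {W₂ U₂ : Matrix κ₂ ι₂ ℝ}
  {T₁ T₂ r : ℝ}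

theorem sub_left : weightedGoodput C (W₁ - U₁) W₂ =
    weightedGoodput C W₁ W₂ - weightedGoodput C U₁ W₂ := by
  simp only [weightedGoodput, Matrix.sub_apply, sub_mul, mul_sub, Finset.sum_sub_distrib]

theorem sub_right : weightedGoodput C W₁ (W₂ - U₂) =
    weightedGoodput C W₁ W₂ - weightedGoodput C W₁ U₂ := by
  simp only [weightedGoodput, Matrix.sub_apply, mul_sub, Finset.sum_sub_distrib]

theorem gain_eq : r * weightedGoodput C W₁ W₂ + (1 - r) * weightedGoodput C W₁ U₂ -
      weightedGoodput C U₁ U₂ =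
    r * weightedGoodput C (W₁ - U₁) (W₂ - U₂) + weightedGoodput C (W₁ - U₁) U₂ +
      r * weightedGoodput C U₁ (W₂ - U₂) := by
  simp only [sub_left, sub_right]
  ring

theorem le_sum_sup'_sup' [Nonempty ι₁] [Nonempty ι₂] (hC : ∀ x, 0 ≤ C x)
    (h₁ : ∀ k, ∑ m, |W₁ k m| ≤ T₁) (h₂ : ∀ k, ∑ m, |W₂ k m| ≤ T₂) :
    weightedGoodput C W₁ W₂ ≤ ∑ k₁, ∑ k₂,
      (Finset.univ.sup' Finset.univ_nonempty fun m₁ =>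
        Finset.univ.sup' Finset.univ_nonempty fun m₂ => C (k₁, m₁, k₂, m₂)) * (T₁ * T₂) := by
  refine Finset.sum_le_sum fun k₁ _ => ?_
  rw [Finset.sum_comm]
  refine Finset.sum_le_sum fun k₂ _ => ?_
  refine (sum_sum_mul_le_sup'_sup'_mul_sum_abs Finset.univ_nonempty Finset.univ_nonempty
    (fun _ _ _ _ => hC _) _ _).trans ?_
  have hT₁ : 0 ≤ T₁ := (Finset.sum_nonneg fun _ _ => abs_nonneg _).trans (h₁ k₁)
  exact mul_le_mul_of_nonneg_left
    (mul_le_mul (h₁ k₁) (h₂ k₂) (Finset.sum_nonneg fun _ _ => abs_nonneg _) hT₁)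
    (sup'_univ_nonneg fun _ => sup'_univ_nonneg fun _ => hC _)

theorem le_sum_sup'_left [Nonempty ι₁] (hC : ∀ x, 0 ≤ C x)
    (h₁ : ∀ k, ∑ m, |W₁ k m| ≤ T₁) (hU₂ : ∀ k m, 0 ≤ U₂ k m) :
    weightedGoodput C W₁ U₂ ≤ ∑ k₁, ∑ k₂, ∑ m₂,
      (Finset.univ.sup' Finset.univ_nonempty fun m₁ => C (k₁, m₁, k₂, m₂)) *
        (U₂ k₂ m₂ * T₁) := by
  refine Finset.sum_le_sum fun k₁ _ => ?_
  rw [Finset.sum_comm]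
  refine Finset.sum_le_sum fun k₂ _ => ?_
  rw [Finset.sum_comm]
  refine Finset.sum_le_sum fun m₂ _ => ?_
  calc ∑ m₁, C (k₁, m₁, k₂, m₂) * (W₁ k₁ m₁ * U₂ k₂ m₂)
      = U₂ k₂ m₂ * ∑ m₁, C (k₁, m₁, k₂, m₂) * W₁ k₁ m₁ := by
        rw [Finset.mul_sum]
        exact Finset.sum_congr rfl fun m₁ _ => by ring
    _ ≤ U₂ k₂ m₂ *
        ((Finset.univ.sup' Finset.univ_nonempty fun m₁ => C (k₁, m₁, k₂, m₂)) * T₁) := by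
        refine mul_le_mul_of_nonneg_left ?_ (hU₂ k₂ m₂)
        exact (sum_mul_le_sup'_mul_sum_abs Finset.univ_nonempty (fun _ _ => hC _) _).trans
          (mul_le_mul_of_nonneg_left (h₁ k₁) (sup'_univ_nonneg fun _ => hC _))
    _ = _ := mul_left_comm _ _ _

theorem le_sum_sup'_right [Nonempty ι₂] (hC : ∀ x, 0 ≤ C x)
    (hU₁ : ∀ k m, 0 ≤ U₁ k m) (h₂ : ∀ k, ∑ m, |W₂ k m| ≤ T₂) :
    weightedGoodput C U₁ W₂ ≤ ∑ k₁, ∑ m₁, ∑ k₂,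
      (Finset.univ.sup' Finset.univ_nonempty fun m₂ => C (k₁, m₁, k₂, m₂)) *
        (U₁ k₁ m₁ * T₂) := by
  refine Finset.sum_le_sum fun k₁ _ => Finset.sum_le_sum fun m₁ _ =>
    Finset.sum_le_sum fun k₂ _ => ?_
  refine (sum_mul_le_sup'_mul_sum_abs Finset.univ_nonempty (fun _ _ => hC _) _).trans ?_
  refine mul_le_mul_of_nonneg_left ?_ (sup'_univ_nonneg fun _ => hC _)
  simp only [abs_mul, abs_of_nonneg (hU₁ k₁ m₁), ← Finset.mul_sum]
  exact mul_le_mul_of_nonneg_left (h₂ k₂) (hU₁ k₁ m₁)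

theorem gain_le [Nonempty ι₁] [Nonempty ι₂] (hC : ∀ x, 0 ≤ C x)
    (hU₁ : ∀ k m, 0 ≤ U₁ k m) (hU₂ : ∀ k m, 0 ≤ U₂ k m)
    (h₁ : ∀ k, ∑ m, |(W₁ - U₁) k m| ≤ T₁) (h₂ : ∀ k, ∑ m, |(W₂ - U₂) k m| ≤ T₂)
    (hr0 : 0 ≤ r) (hr1 : r ≤ 1 / 2) :
    r * weightedGoodput C W₁ W₂ + (1 - r) * weightedGoodput C W₁ U₂ - weightedGoodput C U₁ U₂ ≤
      r * (∑ k₁, ∑ k₂, (Finset.univ.sup' Finset.univ_nonempty fun m₁ =>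
        Finset.univ.sup' Finset.univ_nonempty fun m₂ => C (k₁, m₁, k₂, m₂)) * (T₁ * T₂)) +
      ((1 - r) * (∑ k₁, ∑ m₁, ∑ k₂,
        (Finset.univ.sup' Finset.univ_nonempty fun m₂ => C (k₁, m₁, k₂, m₂)) *
          (U₁ k₁ m₁ * T₂)) +
      ∑ k₁, ∑ k₂, ∑ m₂,
        (Finset.univ.sup' Finset.univ_nonempty fun m₁ => C (k₁, m₁, k₂, m₂)) *
          (U₂ k₂ m₂ * T₁)) := by
  have both_deviate := mul_le_mul_of_nonneg_left (le_sum_sup'_sup' hC h₁ h₂) hr0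
  have first_deviates := le_sum_sup'_left hC h₁ hU₂
  have second_deviates := mul_le_mul_of_nonneg_left (le_sum_sup'_right hC hU₁ h₂) hr0
  have second_bound_nonneg : 0 ≤ ∑ k₁, ∑ m₁, ∑ k₂,
      (Finset.univ.sup' Finset.univ_nonempty fun m₂ => C (k₁, m₁, k₂, m₂)) * (U₁ k₁ m₁ * T₂) :=
    Finset.sum_nonneg fun k₁ _ => Finset.sum_nonneg fun m₁ _ => Finset.sum_nonneg fun k₂ _ =>
      mul_nonneg (sup'_univ_nonneg fun _ => hC _) <| mul_nonneg (hU₁ k₁ m₁) <|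
        (Finset.sum_nonneg fun _ _ => abs_nonneg _).trans (h₂ k₂)
  have r_le := mul_le_mul_of_nonneg_right (show r ≤ 1 - r by linarith) second_bound_nonneg
  rw [gain_eq]
  linarith

end weightedGoodput

end WeightedGoodput

theorem sum_abs_mul_sub_sq_le {ι : Type*} {s : Finset ι} {q : ι → ℝ} {p σ : ℝ} (hp : 0 ≤ p)
    (hσ : 0 ≤ σ) (h : p * (∑ i ∈ s, |q i - p|) ^ 2 ≤ σ ^ 2) :
    ∑ i ∈ s, |p * q i - p ^ 2| ≤ √p * σ := by
  have factor : ∑ i ∈ s, |p * q i - p ^ 2| = p * ∑ i ∈ s, |q i - p| := by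
    rw [Finset.mul_sum]
    exact Finset.sum_congr rfl fun i _ => by rw [sq, ← mul_sub, abs_mul, abs_of_nonneg hp]
  rw [factor]
  refine (sq_le_sq₀ (by positivity) (by positivity)).1 ?_
  calc (p * ∑ i ∈ s, |q i - p|) ^ 2 = p * (p * (∑ i ∈ s, |q i - p|) ^ 2) := by ring
    _ ≤ p * σ ^ 2 := mul_le_mul_of_nonneg_left h hp
    _ = (√p * σ) ^ 2 := by rw [mul_pow, Real.sq_sqrt hp]

theorem one_div_mul_le_sqrt_pow_sq {n x t : ℝ} {D : ℕ} (hn : 0 < n) (ht : 0 ≤ t)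
    (h : x ≤ n * t ^ D) : 1 / n * x ≤ (√t ^ D) ^ 2 := by
  rwa [← pow_mul', pow_mul, Real.sq_sqrt ht, one_div_mul_eq_div, div_le_iff₀' hn]

theorem precoded_goodput_gain_upper_bound_general {ι : Type*} [Fintype ι] [Nonempty ι]
    (Q : Matrix ι ι ℝ) {p σ : ℝ} (hp : 0 ≤ p) (hσ : 0 ≤ σ)
    (hQ : ∀ l, p * (∑ m, |Q l m - p|) ^ 2 ≤ σ ^ 2)
    {r : ℝ} (hr0 : 0 ≤ r) (hr1 : r ≤ 1 / 2) {C : ι × ι × ι × ι → ℝ} (hC : ∀ x, 0 ≤ C x) :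
    r * (∑ k1D, ∑ k10, ∑ k2D, ∑ k20, C (k1D, k10, k2D, k20) * Q k1D k10 * Q k2D k20 * p ^ 2)
      + (1 - r) * (∑ k1D, ∑ k10, ∑ k2D, ∑ k20, C (k1D, k10, k2D, k20) * Q k1D k10 * p ^ 3)
      - (∑ k1D, ∑ k10, ∑ k2D, ∑ k20, C (k1D, k10, k2D, k20) * p ^ 4)
    ≤ (r * ∑ k1D, ∑ k2D,
          (Finset.univ.sup' Finset.univ_nonempty fun k10 =>
            Finset.univ.sup' Finset.univ_nonempty fun k20 => C (k1D, k10, k2D, k20)) * p)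
        * σ ^ 2
      + ((1 - r) * (∑ k1D, ∑ k10, ∑ k2D,
            (Finset.univ.sup' Finset.univ_nonempty fun k20 => C (k1D, k10, k2D, k20))
              * p ^ 2 * √p)
          + (∑ k1D, ∑ k2D, ∑ k20,
            (Finset.univ.sup' Finset.univ_nonempty fun k10 => C (k1D, k10, k2D, k20))
              * p ^ 2 * √p))
        * σ := by
  let U : Matrix ι ι ℝ := Matrix.of fun _ _ => p ^ 2
  have hU : ∀ k m, 0 ≤ U k m := fun _ _ => sq_nonneg p
  have hrow : ∀ k, ∑ m, |(p • Q - U) k m| ≤ √p * σ := fun k =>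
    sum_abs_mul_sub_sq_le hp hσ (hQ k)
  have row_bound_mul_self : √p * σ * (√p * σ) = p * σ ^ 2 := by
    rw [← sq, mul_pow, Real.sq_sqrt hp]
  have both_delayed : ∀ c x y : ℝ, c * (p * x * (p * y)) = c * x * y * p ^ 2 := by intros; ring
  have one_delayed : ∀ c x : ℝ, c * (p * x * p ^ 2) = c * x * p ^ 3 := by intros; ring
  have none_delayed : ∀ c : ℝ, c * (p ^ 2 * p ^ 2) = c * p ^ 4 := by intros; ring
  convert weightedGoodput.gain_le hC hU hU hrow hrow hr0 hr1 using 1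
  · simp only [weightedGoodput, U, Matrix.smul_apply, Matrix.of_apply, smul_eq_mul,
      both_delayed, one_delayed, none_delayed]
  · simp only [U, Matrix.of_apply, row_bound_mul_self, ← Finset.sum_mul]
    ring

/-- Proposition 3: for a fixed feedback delay of `D` samples and `r ≤ 1/2`, the
ergodic goodput gain `Δρ_P(D) = r·ρ1(D) + (1−r)·ρ2(D) − ρ∞` of the limited
feedback precoded spatial multiplexing system with other-cell interference is
bounded as `Δρ_P(D) ≤ a·(√λ)^{2D} + b·(√λ)^D`, where
`a = r·Σ_{k1D,k2D} (max_{k10,k20} C_P)·π` and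
`b = (1−r)·Σ_{k1D,k10,k2D} (max_{k20} C_P)·π²·√π + Σ_{k1D,k2D,k20} (max_{k10} C_P)·π²·√π`,
with `π = 1/N`, `P` row stochastic, and the Markov convergence bound
`(Σ_m |(P^D)_{lm} − 1/N|)² ≤ N·λ^D`. -/
theorem precoded_goodput_gain_upper_bound (N : ℕ) [NeZero N]
    (P : Matrix (Fin N) (Fin N) ℝ)
    (hP0 : ∀ l m, 0 ≤ P l m) (hP1 : ∀ l, ∑ m, P l m = 1)
    (lam : ℝ) (hlam0 : 0 ≤ lam) (hlam1 : lam ≤ 1) (D : ℕ)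
    (hconv : ∀ l, (∑ m, |(P ^ D) l m - 1 / (N : ℝ)|) ^ 2 ≤ (N : ℝ) * lam ^ D)
    (r : ℝ) (hr0 : 0 ≤ r) (hr1 : r ≤ 1/2)
    (C : Fin N × Fin N × Fin N × Fin N → ℝ) (hC : ∀ x, 0 ≤ C x) :
    r * (∑ k1D : Fin N, ∑ k10 : Fin N, ∑ k2D : Fin N, ∑ k20 : Fin N,
          C (k1D, k10, k2D, k20) * (P ^ D) k1D k10 * (P ^ D) k2D k20
            * (1 / (N : ℝ)) ^ 2)
      + (1 - r) * (∑ k1D : Fin N, ∑ k10 : Fin N, ∑ k2D : Fin N, ∑ k20 : Fin N,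
          C (k1D, k10, k2D, k20) * (P ^ D) k1D k10 * (1 / (N : ℝ)) ^ 3)
      - (∑ k1D : Fin N, ∑ k10 : Fin N, ∑ k2D : Fin N, ∑ k20 : Fin N,
          C (k1D, k10, k2D, k20) * (1 / (N : ℝ)) ^ 4)
    ≤ (r * ∑ k1D : Fin N, ∑ k2D : Fin N,
          (Finset.univ.sup' Finset.univ_nonempty fun k10 : Fin N =>
            Finset.univ.sup' Finset.univ_nonempty fun k20 : Fin N =>
              C (k1D, k10, k2D, k20)) * (1 / (N : ℝ)))
        * Real.sqrt lam ^ (2 * D)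
      + ((1 - r) * (∑ k1D : Fin N, ∑ k10 : Fin N, ∑ k2D : Fin N,
            (Finset.univ.sup' Finset.univ_nonempty fun k20 : Fin N =>
                C (k1D, k10, k2D, k20))
              * (1 / (N : ℝ)) ^ 2 * Real.sqrt (1 / (N : ℝ)))
          + (∑ k1D : Fin N, ∑ k2D : Fin N, ∑ k20 : Fin N,
            (Finset.univ.sup' Finset.univ_nonempty fun k10 : Fin N =>
                C (k1D, k10, k2D, k20))
              * (1 / (N : ℝ)) ^ 2 * Real.sqrt (1 / (N : ℝ))))
        * Real.sqrt lam ^ D := by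
  rw [pow_mul']
  exact precoded_goodput_gain_upper_bound_general (P ^ D) (by positivity) (by positivity)
    (fun l => one_div_mul_le_sqrt_pow_sq (Nat.cast_pos.2 (NeZero.pos N)) hlam0 (hconv l)) hr0 hr1 hC
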